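/- For every ε > 0 there exist constants C, c > 0 such that for all d ≥ 2, if w ~ Unif(S^{d−1}(1)) and L is the d×d cyclic shift matrix, then P( max_{1≤k≤d−1} |⟨w, L^k w⟩| > C·d^{ε−1/2} ) ≤ C·exp(−c·d^{2ε}). -/

import Mathlib

/-!
The proof transfers the problem to a standard Gaussian vector and bounds an exponential moment.
For a permutation `σ` without fixed points put `Q w = ∑ i, w i * w (σ i)`; the overlaps in
question are those of the nonzero cyclic translations.

* *From the sphere to the Gaussian.* If `w` is uniform on the unit sphere and `g` is an independent
  standard Gaussian vector, then `‖g‖ • w` is standard Gaussian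
  (`map_norm_smul_eq_stdGaussian`): rotation invariance makes the characteristic function of `w`
  radial, which permits exchanging the roles of `‖g‖` and the norm of the frequency. As
  `E ‖g‖² = d`, Jensen's inequality gives `E exp (b d Q(w)) ≤ E exp (b ‖g‖² Q(w)) = E exp (b Q(g))`
  (`lintegral_exp_overlap_le`).
* *Decoupling.* Since `E Q(g) = 0`, Jensen again gives
  `E exp (b Q(g)) ≤ E exp (b (Q(g) - Q(g')))` for an independent copy `g'`. Rotating the pair
  `(g, g')` by `π / 4` turns `Q(g) - Q(g')` into `⟨g, S g'⟩`, where
  `(S y) i = y (σ i) + y (σ⁻¹ i)` satisfies `‖S y‖² ≤ 4 ‖y‖²`. Integrating over `g` and then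
  over `g'` bounds the moment by `exp (4 b² d)` (`lintegral_exp_overlap_stdGaussian_le`).
* *Tail.* Markov's inequality with `b = ± t / 8` yields `P(|Q(w)| > t) ≤ 2 exp (-d t² / 16)` for
  `0 ≤ t ≤ 1` (`measure_lt_abs_overlap_le`), while `|Q(w)| ≤ 1` disposes of `t > 1`.
  With `t = C d ^ (ε - 1/2)` the exponent is `C² d ^ (2ε) / 16`, and the factor `d` of the union
  bound is absorbed through `log d ≤ d ^ (2ε) / (2ε)`.
-/

open MeasureTheory

/-- `μ` is the uniform probability measure on the sphere of radius `r` in `ℝ^d`: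
it is a probability measure, supported on the sphere, and invariant under every
orthogonal linear transformation.  (These properties characterize the uniform
measure uniquely.) -/
def IsUniformOnSphere (d : ℕ) (r : ℝ) (μ : Measure (Fin d → ℝ)) : Prop :=
  IsProbabilityMeasure μ ∧
  μ {x | ∑ i, x i ^ 2 ≠ r ^ 2} = 0 ∧
  ∀ T : (Fin d → ℝ) →ₗ[ℝ] (Fin d → ℝ),
    (∀ x y : Fin d → ℝ, ∑ i, T x i * T y i = ∑ i, x i * y i) →
    Measure.map T μ = μ

open ProbabilityTheory

/-! ### A uniform direction times an independent Gaussian norm is Gaussian -/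

/-- The characteristic function of a rotation-invariant measure is radial: a reflection carries
any vector to any other one of the same norm. -/
lemma charFun_eq_of_norm_eq {E : Type*} [NormedAddCommGroup E] [InnerProductSpace ℝ E]
    [FiniteDimensional ℝ E] [MeasurableSpace E] [BorelSpace E] {m : Measure E}
    (hm : ∀ T : E ≃ₗᵢ[ℝ] E, m.map T = m)
    {s t : E} (hst : ‖s‖ = ‖t‖) : charFun m s = charFun m t := by
  set T := Submodule.reflection (ℝ ∙ (s - t))ᗮ
  have hT : T s = t := Submodule.reflection_sub hst
  calc charFun m s = ∫ x, Complex.exp (inner ℝ (T x) t * Complex.I) ∂m := by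
        simp_rw [charFun_apply, ← hT, LinearIsometryEquiv.inner_map_map]
    _ = charFun (m.map T) t := by
        rw [charFun_apply, integral_map]
        · exact T.continuous.measurable.aemeasurable
        · exact (by fun_prop : Continuous fun x : E ↦
            Complex.exp (inner ℝ x t * Complex.I)).aestronglyMeasurable
    _ = charFun m t := by rw [hm]

/-- An independent Gaussian norm times a uniform unit vector is a standard Gaussian vector.
With `φ(r)` the value of the characteristic function of `w` at any vector of norm `r`, both
`E exp (i ⟨‖g‖ • w, t⟩)` and `E exp (i ⟨w, ‖t‖ • g⟩)` equal `E φ(‖g‖ ‖t‖)`, and integrating the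
second over `g` first gives `exp (-‖t‖² / 2)`. -/
lemma map_norm_smul_eq_stdGaussian {E : Type*} [NormedAddCommGroup E] [InnerProductSpace ℝ E]
    [FiniteDimensional ℝ E] [MeasurableSpace E] [BorelSpace E] {m : Measure E}
    [IsProbabilityMeasure m]
    (hm : ∀ T : E ≃ₗᵢ[ℝ] E, m.map T = m)
    (hm1 : ∀ᵐ w ∂m, ‖w‖ = 1) :
    (m.prod (stdGaussian E)).map (fun p : E × E ↦ ‖p.2‖ • p.1) =
      stdGaussian E := by
  have : IsProbabilityMeasure ((m.prod (stdGaussian E)).map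
      (fun p : E × E ↦ ‖p.2‖ • p.1)) := Measure.isProbabilityMeasure_map (by fun_prop)
  have hint : ∀ f : E × E → ℝ, Continuous f →
      Integrable (fun p ↦ Complex.exp (f p * Complex.I))
        (m.prod (stdGaussian E)) := by
    intro f hf
    refine Integrable.of_bound (C := 1) (by fun_prop) (ae_of_all _ fun p ↦ ?_)
    rw [Complex.norm_exp_ofReal_mul_I]
  apply Measure.ext_of_charFun
  ext t
  rw [charFun_apply, integral_map (by fun_prop)
    (by fun_prop : Continuous fun x : E ↦
            Complex.exp (inner ℝ x t * Complex.I)).aestronglyMeasurable,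
    integral_prod_symm _ (hint _ (by fun_prop))]
  calc ∫ g, ∫ w, Complex.exp (inner ℝ (‖g‖ • w) t * Complex.I) ∂m ∂stdGaussian E
      = ∫ g, charFun m (‖g‖ • t) ∂stdGaussian E := by
        simp_rw [charFun_apply, real_inner_smul_left, real_inner_smul_right]
    _ = ∫ g, charFun m (‖t‖ • g) ∂stdGaussian E := by
        congr 1 with g
        apply charFun_eq_of_norm_eq hm
        simp [norm_smul, mul_comm]
    _ = ∫ w, charFun (stdGaussian E) (‖t‖ • w) ∂m := by
        simp_rw [charFun_apply]
        rw [← integral_prod_symm (fun p : E × E ↦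
            Complex.exp (inner ℝ p.1 (‖t‖ • p.2) * Complex.I)) (hint _ (by fun_prop)),
          integral_prod _ (hint _ (by fun_prop))]
        simp_rw [real_inner_smul_right, real_inner_comm]
    _ = ∫ w, charFun (stdGaussian E) t ∂m := by
        refine integral_congr_ae (hm1.mono fun w hw ↦ ?_)
        simp [charFun_stdGaussian, norm_smul, hw]
    _ = charFun (stdGaussian E) t := by simp

/-! ### Exponential moments of Gaussian vectors -/

/-- Jensen's inequality for `exp`, valid without integrability of `exp ∘ X` because the right-hand
side is then infinite. -/
lemma ofReal_exp_integral_le {Ω : Type*} [MeasurableSpace Ω] {P : Measure Ω}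
    [IsProbabilityMeasure P] {X : Ω → ℝ} (hX : Integrable X P) :
    ENNReal.ofReal (Real.exp (∫ ω, X ω ∂P)) ≤ ∫⁻ ω, ENNReal.ofReal (Real.exp (X ω)) ∂P := by
  by_cases h : Integrable (fun ω ↦ Real.exp (X ω)) P
  · rw [← ofReal_integral_eq_lintegral_ofReal h (ae_of_all _ fun _ ↦ (Real.exp_pos _).le)]
    exact ENNReal.ofReal_le_ofReal (convexOn_exp.map_integral_le Real.continuous_exp.continuousOn
      isClosed_univ (by simp) hX h)
  · have : ∫⁻ ω, ENNReal.ofReal (Real.exp (X ω)) ∂P = ⊤ := by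
      by_contra hne
      exact h ((lintegral_ofReal_ne_top_iff_integrable
        (Real.continuous_exp.comp_aestronglyMeasurable hX.1)
        (ae_of_all _ fun _ ↦ (Real.exp_pos _).le)).1 hne)
    simp [this]

/-- The left-hand side equals `(1 - 2a)^(-1/2)`, and `1 / (1 - 2a) ≤ 1 + 4a` for
`0 ≤ a ≤ 1/4`. -/
lemma lintegral_exp_mul_sq_gaussianReal_le {a : ℝ} (ha : a ≤ 1 / 4) (ha0 : 0 ≤ a) :
    ∫⁻ x, ENNReal.ofReal (Real.exp (a * x ^ 2)) ∂gaussianReal 0 1 ≤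
      ENNReal.ofReal (Real.exp (2 * a)) := by
  have h0 : 0 < 1 / 2 - a := by linarith
  rw [gaussianReal_of_var_ne_zero _ one_ne_zero,
    lintegral_withDensity_eq_lintegral_mul _ (measurable_gaussianPDF _ _) (by fun_prop)]
  have h1 : ∀ x : ℝ, (gaussianPDF 0 1 * fun x ↦ ENNReal.ofReal (Real.exp (a * x ^ 2))) x =
      ENNReal.ofReal ((√(2 * Real.pi))⁻¹ * Real.exp (-(1 / 2 - a) * x ^ 2)) := by
    intro x
    rw [Pi.mul_apply, gaussianPDF, ← ENNReal.ofReal_mul (gaussianPDFReal_nonneg _ _ _),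
      gaussianPDFReal_def]
    simp only [NNReal.coe_one, mul_one, sub_zero, mul_assoc, ← Real.exp_add]
    ring_nf
  simp_rw [h1]
  rw [← ofReal_integral_eq_lintegral_ofReal ((integrable_exp_neg_mul_sq h0).const_mul _)
    (ae_of_all _ fun _ ↦ by positivity), integral_const_mul, integral_gaussian]
  apply ENNReal.ofReal_le_ofReal
  rw [← Real.sqrt_inv, ← Real.sqrt_mul (by positivity)]
  apply Real.sqrt_le_iff.2 ⟨by positivity, ?_⟩
  rw [← Real.exp_nat_mul]
  have h2 : (2 * Real.pi)⁻¹ * (Real.pi / (1 / 2 - a)) = 1 / (1 - 2 * a) := by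
    have : 1 - 2 * a ≠ 0 := by linarith
    have := Real.pi_ne_zero
    field_simp
  rw [h2, div_le_iff₀ (by linarith)]
  have h3 := Real.add_one_le_exp (((2 : ℕ) : ℝ) * (2 * a))
  push_cast at h3 ⊢
  nlinarith

lemma lintegral_exp_mul_norm_sq_stdGaussian_le {d : ℕ} {a : ℝ} (ha : a ≤ 1 / 4) (ha0 : 0 ≤ a) :
    ∫⁻ x, ENNReal.ofReal (Real.exp (a * ‖x‖ ^ 2)) ∂stdGaussian (EuclideanSpace ℝ (Fin d)) ≤
      ENNReal.ofReal (Real.exp (2 * a * d)) := by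
  rw [← map_pi_eq_stdGaussian, lintegral_map (by fun_prop) (by fun_prop)]
  have h1 : ∀ x : Fin d → ℝ, ENNReal.ofReal (Real.exp (a * ‖WithLp.toLp 2 x‖ ^ 2)) =
      ∏ i, ENNReal.ofReal (Real.exp (a * x i ^ 2)) := by
    intro x
    rw [EuclideanSpace.real_norm_sq_eq, Finset.mul_sum, Real.exp_sum,
      ENNReal.ofReal_prod_of_nonneg fun _ _ ↦ (Real.exp_pos _).le]
  simp_rw [h1]
  have hind := iIndepFun_pi (μ := fun _ : Fin d ↦ gaussianReal 0 1)
    (X := fun _ x ↦ ENNReal.ofReal (Real.exp (a * x ^ 2))) (fun _ ↦ by fun_prop)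
  rw [lintegral_prod_eq_prod_lintegral_of_indepFun _ _ hind (fun _ ↦ by fun_prop)]
  calc _ ≤ ∏ i : Fin d, ENNReal.ofReal (Real.exp (2 * a)) := by
        refine Finset.prod_le_prod' fun i _ ↦ ?_
        exact ((measurePreserving_eval (fun _ : Fin d ↦ gaussianReal 0 1) i).lintegral_comp
          (f := fun x ↦ ENNReal.ofReal (Real.exp (a * x ^ 2))) (by fun_prop)).trans_le
          (lintegral_exp_mul_sq_gaussianReal_le ha ha0)
    _ = _ := by
        rw [Finset.prod_const, ← ENNReal.ofReal_pow (Real.exp_pos _).le, ← Real.exp_nat_mul]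
        simp [mul_comm]

lemma lintegral_exp_inner_stdGaussian {d : ℕ} (y : EuclideanSpace ℝ (Fin d)) :
    ∫⁻ x, ENNReal.ofReal (Real.exp (inner ℝ x y)) ∂stdGaussian (EuclideanSpace ℝ (Fin d)) =
      ENNReal.ofReal (Real.exp (‖y‖ ^ 2 / 2)) := by
  have hmap := IsGaussian.map_eq_gaussianReal (μ := stdGaussian (EuclideanSpace ℝ (Fin d)))
    (InnerProductSpace.toDual ℝ _ y)
  rw [integral_strongDual_stdGaussian, variance_dual_stdGaussian] at hmap
  have hint := integrable_exp_mul_gaussianReal (μ := 0)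
    (v := (‖InnerProductSpace.toDual ℝ _ y‖ ^ 2).toNNReal) 1
  have hmgf := mgf_gaussianReal hmap 1
  rw [← hmap, integrable_map_measure (by fun_prop) (by fun_prop)] at hint
  simp only [Function.comp_def, one_mul, InnerProductSpace.toDual_apply_apply] at hint
  simp only [mgf, InnerProductSpace.toDual_apply_apply, one_mul] at hmgf
  simp_rw [real_inner_comm]
  rw [← ofReal_integral_eq_lintegral_ofReal hint (ae_of_all _ fun _ ↦ (Real.exp_pos _).le), hmgf]
  simp

lemma integral_mul_stdGaussian {d : ℕ} (i j : Fin d) :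
    Integrable (fun x ↦ x i * x j) (stdGaussian (EuclideanSpace ℝ (Fin d))) ∧
    ∫ x, x i * x j ∂stdGaussian (EuclideanSpace ℝ (Fin d)) = if i = j then 1 else 0 := by
  have hL : ∀ i : Fin d, (fun x : EuclideanSpace ℝ (Fin d) ↦ x i) =
      fun x ↦ inner ℝ (EuclideanSpace.basisFun (Fin d) ℝ i) x := by
    intro i; ext x; simp [PiLp.inner_apply]
  have hmem : ∀ i : Fin d, MemLp (fun x : EuclideanSpace ℝ (Fin d) ↦ x i) 2
      (stdGaussian (EuclideanSpace ℝ (Fin d))) := by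
    intro i
    have := IsGaussian.memLp_dual (stdGaussian (EuclideanSpace ℝ (Fin d)))
      (EuclideanSpace.proj i) 2 (by simp)
    exact this
  have hmean : ∀ i : Fin d, ∫ x, x i ∂stdGaussian (EuclideanSpace ℝ (Fin d)) = 0 := fun i ↦
    integral_strongDual_stdGaussian (EuclideanSpace.proj i)
  refine ⟨(hmem i).integrable_mul (hmem j), ?_⟩
  have hc : cov[fun x ↦ x i, fun x ↦ x j; stdGaussian (EuclideanSpace ℝ (Fin d))] =
      if i = j then 1 else 0 := by
    rw [hL, hL, ← covarianceBilin_apply_eq_cov IsGaussian.memLp_two_id,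
      covarianceBilin_stdGaussian]
    exact (innerSL_apply_apply ℝ _ _).trans
      (orthonormal_iff_ite.1 (EuclideanSpace.basisFun (Fin d) ℝ).orthonormal i j)
  rw [covariance_eq_sub (hmem i) (hmem j), hmean, hmean] at hc
  simpa using hc

/-! ### The overlap form and its exponential moments -/

lemma integrable_norm_sq_stdGaussian (d : ℕ) :
    Integrable (fun x ↦ ‖x‖ ^ 2) (stdGaussian (EuclideanSpace ℝ (Fin d))) ∧
    ∫ x, ‖x‖ ^ 2 ∂stdGaussian (EuclideanSpace ℝ (Fin d)) = d := by
  simp_rw [EuclideanSpace.real_norm_sq_eq, sq]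
  refine ⟨integrable_finsetSum _ fun i _ ↦ (integral_mul_stdGaussian i i).1, ?_⟩
  rw [integral_finsetSum _ fun i _ ↦ (integral_mul_stdGaussian i i).1]
  simp [integral_mul_stdGaussian]

/-- The quadratic form `⟨x, L x⟩ = ∑ i, x i * x (σ i)`, where `L` is the permutation matrix of `σ`;
the powers of the cyclic shift correspond to the translations `σ = (· + k)` of `Fin d`. -/
def overlap {d : ℕ} (σ : Equiv.Perm (Fin d)) (x : EuclideanSpace ℝ (Fin d)) : ℝ :=
  ∑ i, x i * x (σ i)

@[fun_prop]
lemma continuous_overlap {d : ℕ} (σ : Equiv.Perm (Fin d)) : Continuous (overlap σ) := by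
  unfold overlap; fun_prop

@[fun_prop]
lemma measurable_overlap {d : ℕ} (σ : Equiv.Perm (Fin d)) : Measurable (overlap σ) :=
  (continuous_overlap σ).measurable

lemma overlap_smul {d : ℕ} (σ : Equiv.Perm (Fin d)) (r : ℝ) (x : EuclideanSpace ℝ (Fin d)) :
    overlap σ (r • x) = r ^ 2 * overlap σ x := by
  simp only [overlap, PiLp.smul_apply, smul_eq_mul, Finset.mul_sum]
  exact Finset.sum_congr rfl fun i _ ↦ by ring

lemma integrable_overlap_stdGaussian {d : ℕ} {σ : Equiv.Perm (Fin d)} (hσ : ∀ i, σ i ≠ i) :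
    Integrable (overlap σ) (stdGaussian (EuclideanSpace ℝ (Fin d))) ∧
    ∫ x, overlap σ x ∂stdGaussian (EuclideanSpace ℝ (Fin d)) = 0 := by
  unfold overlap
  refine ⟨integrable_finsetSum _ fun i _ ↦ (integral_mul_stdGaussian i (σ i)).1, ?_⟩
  rw [integral_finsetSum _ fun i _ ↦ (integral_mul_stdGaussian i (σ i)).1]
  exact Finset.sum_eq_zero fun i _ ↦ by
    rw [(integral_mul_stdGaussian i (σ i)).2, if_neg (hσ i).symm]

/-- The vector `(L + Lᵀ) y`, where `L` is the permutation matrix of `σ`. -/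
def symmShift {d : ℕ} (σ : Equiv.Perm (Fin d)) (y : EuclideanSpace ℝ (Fin d)) :
    EuclideanSpace ℝ (Fin d) :=
  WithLp.toLp 2 fun i ↦ y (σ i) + y (σ.symm i)

@[fun_prop]
lemma continuous_symmShift {d : ℕ} (σ : Equiv.Perm (Fin d)) : Continuous (symmShift σ) := by
  unfold symmShift; fun_prop

lemma norm_symmShift_sq_le {d : ℕ} (σ : Equiv.Perm (Fin d)) (y : EuclideanSpace ℝ (Fin d)) :
    ‖symmShift σ y‖ ^ 2 ≤ 4 * ‖y‖ ^ 2 := by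
  rw [EuclideanSpace.real_norm_sq_eq, EuclideanSpace.real_norm_sq_eq]
  calc ∑ i, (symmShift σ y i) ^ 2 ≤ ∑ i, (2 * y (σ i) ^ 2 + 2 * y (σ.symm i) ^ 2) := by
        refine Finset.sum_le_sum fun i _ ↦ ?_
        simp only [symmShift]
        nlinarith [sq_nonneg (y (σ i) - y (σ.symm i))]
    _ = 4 * ∑ i, y i ^ 2 := by
        rw [Finset.sum_add_distrib, ← Finset.mul_sum, ← Finset.mul_sum,
          Equiv.sum_comp σ (fun i ↦ y i ^ 2), Equiv.sum_comp σ.symm (fun i ↦ y i ^ 2)]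
        ring

/-- Rotating a pair `(x, y)` by `π / 4` decouples the difference of overlaps into the bilinear form
`⟨x, (L + Lᵀ) y⟩`. -/
lemma overlap_rotation {d : ℕ} (σ : Equiv.Perm (Fin d))
    (p : EuclideanSpace ℝ (Fin d) × EuclideanSpace ℝ (Fin d)) :
    overlap σ (ContinuousLinearMap.rotation (Real.pi / 4) p).1 -
      overlap σ (ContinuousLinearMap.rotation (Real.pi / 4) p).2 =
      inner ℝ p.1 (symmShift σ p.2) := by
  have h2 : √2 * √2 = (2 : ℝ) := Real.mul_self_sqrt (by norm_num)
  have hr : ∑ i, p.1 (σ i) * p.2 i = ∑ i, p.1 i * p.2 (σ.symm i) := by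
    rw [← Equiv.sum_comp σ (fun i ↦ p.1 i * p.2 (σ.symm i))]
    simp
  rw [ContinuousLinearMap.rotation_apply, Real.cos_pi_div_four, Real.sin_pi_div_four]
  calc _ = ∑ i, p.1 i * p.2 (σ i) + ∑ i, p.1 (σ i) * p.2 i := by
        simp only [overlap, ← Finset.sum_sub_distrib, ← Finset.sum_add_distrib]
        refine Finset.sum_congr rfl fun i _ ↦ ?_
        simp only [PiLp.add_apply, PiLp.smul_apply, smul_eq_mul]
        linear_combination (p.1 i * p.2 (σ i) + p.1 (σ i) * p.2 i) / 2 * h2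
    _ = _ := by
        rw [hr, ← Finset.sum_add_distrib, PiLp.inner_apply]
        refine Finset.sum_congr rfl fun i _ ↦ ?_
        simp [symmShift]
        ring

/-- The overlap of a Gaussian vector is centered and sub-exponential, by symmetrization with an
independent copy followed by a rotation of the pair. -/
lemma lintegral_exp_overlap_stdGaussian_le {d : ℕ} {σ : Equiv.Perm (Fin d)}
    (hσ : ∀ i, σ i ≠ i) {b : ℝ} (hb : 2 * b ^ 2 ≤ 1 / 4) :
    ∫⁻ x, ENNReal.ofReal (Real.exp (b * overlap σ x)) ∂stdGaussian (EuclideanSpace ℝ (Fin d)) ≤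
      ENNReal.ofReal (Real.exp (4 * b ^ 2 * d)) := by
  set ν := stdGaussian (EuclideanSpace ℝ (Fin d)) with hν
  have hone : 1 ≤ ∫⁻ x, ENNReal.ofReal (Real.exp (-b * overlap σ x)) ∂ν := by
    have h := ofReal_exp_integral_le ((integrable_overlap_stdGaussian hσ).1.const_mul (-b))
    rwa [integral_const_mul, (integrable_overlap_stdGaussian hσ).2, mul_zero, Real.exp_zero,
      ENNReal.ofReal_one] at h
  calc ∫⁻ x, ENNReal.ofReal (Real.exp (b * overlap σ x)) ∂ν
      ≤ (∫⁻ x, ENNReal.ofReal (Real.exp (b * overlap σ x)) ∂ν) *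
          ∫⁻ x, ENNReal.ofReal (Real.exp (-b * overlap σ x)) ∂ν := le_mul_of_one_le_right' hone
    _ = ∫⁻ p, ENNReal.ofReal (Real.exp (b * (overlap σ p.1 - overlap σ p.2))) ∂ν.prod ν := by
        rw [← lintegral_prod_mul (by fun_prop) (by fun_prop)]
        refine lintegral_congr fun p ↦ ?_
        rw [← ENNReal.ofReal_mul (Real.exp_pos _).le, ← Real.exp_add]
        ring_nf
    _ = ∫⁻ p, ENNReal.ofReal (Real.exp (inner ℝ p.1 (b • symmShift σ p.2))) ∂ν.prod ν := by
        conv_lhs => rw [← IsGaussian.map_rotation_eq_self (μ := ν) (by simp [hν]) (Real.pi / 4)]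
        rw [lintegral_map (by fun_prop) (by fun_prop)]
        simp_rw [overlap_rotation, real_inner_smul_right]
    _ = ∫⁻ y, ∫⁻ x, ENNReal.ofReal (Real.exp (inner ℝ x (b • symmShift σ y))) ∂ν ∂ν := by
        rw [lintegral_prod_symm _ (by fun_prop)]
    _ ≤ ∫⁻ y, ENNReal.ofReal (Real.exp (2 * b ^ 2 * ‖y‖ ^ 2)) ∂ν := by
        refine lintegral_mono fun y ↦ ?_
        rw [hν, lintegral_exp_inner_stdGaussian]
        refine ENNReal.ofReal_le_ofReal (Real.exp_le_exp.2 ?_)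
        rw [norm_smul, mul_pow, Real.norm_eq_abs, sq_abs]
        nlinarith [norm_symmShift_sq_le σ y, sq_nonneg b]
    _ ≤ ENNReal.ofReal (Real.exp (2 * (2 * b ^ 2) * d)) :=
        lintegral_exp_mul_norm_sq_stdGaussian_le hb (by positivity)
    _ = _ := by ring_nf

/-- The Gaussian exponential moment dominates the spherical one, by Jensen's inequality in the
independent radius `‖g‖`, whose square has mean `d`. -/
lemma lintegral_exp_overlap_le {d : ℕ} {m : Measure (EuclideanSpace ℝ (Fin d))}
    [IsProbabilityMeasure m]
    (hm : ∀ T : EuclideanSpace ℝ (Fin d) ≃ₗᵢ[ℝ] EuclideanSpace ℝ (Fin d), m.map T = m)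
    (hm1 : ∀ᵐ w ∂m, ‖w‖ = 1) {σ : Equiv.Perm (Fin d)}
    (hσ : ∀ i, σ i ≠ i) {b : ℝ} (hb : 2 * b ^ 2 ≤ 1 / 4) :
    ∫⁻ w, ENNReal.ofReal (Real.exp (b * d * overlap σ w)) ∂m ≤
      ENNReal.ofReal (Real.exp (4 * b ^ 2 * d)) := by
  calc ∫⁻ w, ENNReal.ofReal (Real.exp (b * d * overlap σ w)) ∂m
      ≤ ∫⁻ w, ∫⁻ g, ENNReal.ofReal (Real.exp (b * overlap σ (‖g‖ • w)))
          ∂stdGaussian (EuclideanSpace ℝ (Fin d)) ∂m := by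
        refine lintegral_mono fun w ↦ ?_
        have h := ofReal_exp_integral_le
          ((integrable_norm_sq_stdGaussian d).1.const_mul (b * overlap σ w))
        rw [integral_const_mul, (integrable_norm_sq_stdGaussian d).2] at h
        simp_rw [overlap_smul]
        simpa only [mul_right_comm, mul_assoc, mul_comm (‖_‖ ^ 2)] using h
    _ = ∫⁻ x, ENNReal.ofReal (Real.exp (b * overlap σ x))
          ∂stdGaussian (EuclideanSpace ℝ (Fin d)) := by
        conv_rhs => rw [← map_norm_smul_eq_stdGaussian hm hm1]
        rw [lintegral_map (by fun_prop) (by fun_prop), lintegral_prod _ (by fun_prop)]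
    _ ≤ _ := lintegral_exp_overlap_stdGaussian_le hσ hb

/-! ### Tail bounds on the sphere -/

lemma measure_lt_abs_overlap_le {d : ℕ} {m : Measure (EuclideanSpace ℝ (Fin d))}
    [IsProbabilityMeasure m]
    (hm : ∀ T : EuclideanSpace ℝ (Fin d) ≃ₗᵢ[ℝ] EuclideanSpace ℝ (Fin d), m.map T = m)
    (hm1 : ∀ᵐ w ∂m, ‖w‖ = 1) {σ : Equiv.Perm (Fin d)}
    (hσ : ∀ i, σ i ≠ i) {t : ℝ} (ht0 : 0 ≤ t) (ht1 : t ≤ 1) :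
    m {w | t < |overlap σ w|} ≤ ENNReal.ofReal (2 * Real.exp (-(d * t ^ 2 / 16))) := by
  -- Markov's inequality, once for each sign of `b = ± t / 8`, the minimizer of `4 b² d - |b| d t`.
  have hside : ∀ b : ℝ, b ^ 2 = (t / 8) ^ 2 →
      m {w | t / 8 * d * t ≤ b * d * overlap σ w} ≤
        ENNReal.ofReal (Real.exp (-(d * t ^ 2 / 16))) := by
    intro b hb
    have hM := meas_ge_le_lintegral_div (μ := m)
      (f := fun w ↦ ENNReal.ofReal (Real.exp (b * d * overlap σ w))) (by fun_prop)
      (ε := ENNReal.ofReal (Real.exp (t / 8 * d * t)))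
      (by simp [Real.exp_pos]) ENNReal.ofReal_ne_top
    calc m {w | t / 8 * d * t ≤ b * d * overlap σ w}
        ≤ m {w | ENNReal.ofReal (Real.exp (t / 8 * d * t)) ≤
            ENNReal.ofReal (Real.exp (b * d * overlap σ w))} :=
          measure_mono fun w hw ↦ ENNReal.ofReal_le_ofReal (Real.exp_le_exp.2 hw)
      _ ≤ _ := hM
      _ ≤ ENNReal.ofReal (Real.exp (4 * b ^ 2 * d)) /
            ENNReal.ofReal (Real.exp (t / 8 * d * t)) := by
          gcongr
          exact lintegral_exp_overlap_le hm hm1 hσ (by rw [hb]; nlinarith)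
      _ = _ := by
          rw [← ENNReal.ofReal_div_of_pos (Real.exp_pos _), ← Real.exp_sub, hb]
          ring_nf
  have hsub : {w | t < |overlap σ w|} ⊆ {w | t / 8 * d * t ≤ t / 8 * d * overlap σ w} ∪
      {w | t / 8 * d * t ≤ -(t / 8) * d * overlap σ w} := by
    intro w hw
    have hp : 0 ≤ t / 8 * d := by positivity
    rcases lt_abs.1 (show t < |overlap σ w| from hw) with h | h
    · exact Or.inl (mul_le_mul_of_nonneg_left h.le hp)
    · refine Or.inr ?_
      have := mul_le_mul_of_nonneg_left h.le hp
      simp only [Set.mem_ofPred_eq]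
      linarith
  calc m {w | t < |overlap σ w|} ≤ _ := (measure_mono hsub).trans (measure_union_le _ _)
    _ ≤ ENNReal.ofReal (Real.exp (-(d * t ^ 2 / 16))) +
          ENNReal.ofReal (Real.exp (-(d * t ^ 2 / 16))) :=
        add_le_add (hside _ rfl) (hside _ (by ring))
    _ = _ := by rw [← ENNReal.ofReal_add (Real.exp_pos _).le (Real.exp_pos _).le, two_mul]

lemma abs_overlap_le {d : ℕ} (σ : Equiv.Perm (Fin d)) (w : EuclideanSpace ℝ (Fin d)) :
    |overlap σ w| ≤ ‖w‖ ^ 2 := by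
  have h1 : ∑ i, w (σ i) ^ 2 = ∑ i, w i ^ 2 := Equiv.sum_comp σ (fun i ↦ w i ^ 2)
  rw [EuclideanSpace.real_norm_sq_eq]
  calc |overlap σ w| ≤ ∑ i, |w i * w (σ i)| := Finset.abs_sum_le_sum_abs _ _
    _ ≤ ∑ i, (w i ^ 2 + w (σ i) ^ 2) / 2 := by
        refine Finset.sum_le_sum fun i _ ↦ abs_le.2 ⟨?_, ?_⟩
        · nlinarith [sq_nonneg (w i + w (σ i))]
        · nlinarith [sq_nonneg (w i - w (σ i))]
    _ = _ := by rw [← Finset.sum_div, Finset.sum_add_distrib, h1]; ring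

/-- A uniform measure in the sense of `IsUniformOnSphere`, transported to Euclidean space, is
invariant under linear isometries and carried by the unit sphere. -/
lemma IsUniformOnSphere.map_toLp {d : ℕ} {μ : Measure (Fin d → ℝ)}
    (hμ : IsUniformOnSphere d 1 μ) :
    IsProbabilityMeasure (μ.map (WithLp.toLp 2)) ∧
    (∀ T : EuclideanSpace ℝ (Fin d) ≃ₗᵢ[ℝ] EuclideanSpace ℝ (Fin d),
      (μ.map (WithLp.toLp 2)).map T = μ.map (WithLp.toLp 2)) ∧
    ∀ᵐ w ∂μ.map (WithLp.toLp 2), ‖w‖ = 1 := by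
  obtain ⟨hprob, hsph, hinv⟩ := hμ
  refine ⟨Measure.isProbabilityMeasure_map (by fun_prop), fun T ↦ ?_, ?_⟩
  · set e := WithLp.linearEquiv 2 ℝ (Fin d → ℝ)
    set T' : (Fin d → ℝ) →ₗ[ℝ] (Fin d → ℝ) :=
      e.toLinearMap ∘ₗ T.toLinearEquiv.toLinearMap ∘ₗ e.symm.toLinearMap
    have hT' : μ.map T' = μ := by
      refine hinv T' fun x y ↦ ?_
      have h := T.inner_map_map (WithLp.toLp 2 y) (WithLp.toLp 2 x)
      simp only [PiLp.inner_apply, RCLike.inner_apply, conj_trivial] at h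
      exact h
    conv_rhs => rw [← hT']
    rw [Measure.map_map (by fun_prop) (by fun_prop), Measure.map_map (by fun_prop)
      (LinearMap.continuous_of_finiteDimensional T').measurable]
    rfl
  · rw [ae_map_iff (by fun_prop) (measurableSet_eq_fun (by fun_prop) (by fun_prop))]
    have h : ∀ᵐ x ∂μ, ∑ i, x i ^ 2 = 1 ^ 2 := hsph
    filter_upwards [h] with x hx
    rw [← sq_eq_sq₀ (norm_nonneg _) zero_le_one, EuclideanSpace.real_norm_sq_eq]
    exact hx

/-- **Off-diagonal overlaps of a uniform spherical vector with its cyclic shifts are small.**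
For every `ε > 0` there exist `C, c > 0` such that for all `d ≥ 2` and `w` uniform on the
unit sphere `S^{d-1}(1)`,
`P( max_{1 ≤ k ≤ d−1} |⟨w, L^k w⟩| > C d^{ε−1/2} ) ≤ C exp(−c d^{2ε})`,
where `L` is the cyclic shift matrix, so that `⟨w, L^k w⟩ = ∑ i w_i w_{i+k mod d}`. -/
theorem cyclic_overlap_bound :
    ∀ ε : ℝ, 0 < ε → ∃ C : ℝ, 0 < C ∧ ∃ c : ℝ, 0 < c ∧
      ∀ (d : ℕ) (_hd : 2 ≤ d), ∀ μ : Measure (Fin d → ℝ), IsUniformOnSphere d 1 μ →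
        μ {w | ∃ k ∈ Finset.Ico 1 d,
            C * (d : ℝ) ^ (ε - 1 / 2) < |∑ i, w i * w (i + ⟨k % d, Nat.mod_lt _ (by omega)⟩)|}
          ≤ ENNReal.ofReal (C * Real.exp (-c * (d : ℝ) ^ (2 * ε))) := by
  intro ε hε
  have hε2 : 0 < 1 / (2 * ε) := by positivity
  refine ⟨4 * (1 + 1 / (2 * ε)), by positivity, 1, one_pos, fun d hd μ hμ ↦ ?_⟩
  obtain ⟨hprob, hinv, hnorm⟩ := hμ.map_toLp
  set C := 4 * (1 + 1 / (2 * ε)) with hC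
  set t := C * (d : ℝ) ^ (ε - 1 / 2) with ht
  set A := 2 * Real.exp (-(d * t ^ 2 / 16))
  have : NeZero d := ⟨by omega⟩
  have hd0 : (0 : ℝ) < d := by positivity
  have ht0 : 0 ≤ t := by positivity
  have hshift : ∀ k ∈ Finset.Ico 1 d,
      μ {w | t < |∑ i, w i * w (i + ⟨k % d, Nat.mod_lt _ (by omega)⟩)|} ≤ ENNReal.ofReal A := by
    intro k hk
    rw [Finset.mem_Ico] at hk
    set σ : Equiv.Perm (Fin d) := Equiv.addRight ⟨k % d, Nat.mod_lt _ (by omega)⟩ with hσd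
    have hσ : ∀ i, σ i ≠ i := by
      intro i h
      have h0 : (⟨k % d, Nat.mod_lt _ (by omega)⟩ : Fin d) = 0 := by
        simpa [hσd] using h
      have h1 := congrArg Fin.val h0
      simp only [Nat.mod_eq_of_lt hk.2, Fin.val_zero] at h1
      omega
    have hmap : μ {w | t < |∑ i, w i * w (i + ⟨k % d, Nat.mod_lt _ (by omega)⟩)|} =
        μ.map (WithLp.toLp 2) {w | t < |overlap σ w|} := by
      rw [Measure.map_apply (by fun_prop) (measurableSet_lt (by fun_prop) (by fun_prop))]
      rfl
    rw [hmap]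
    rcases le_or_gt t 1 with ht1 | ht1
    · exact measure_lt_abs_overlap_le hinv hnorm hσ ht0 ht1
    -- For `t > 1` (which occurs when `ε ≥ 1/2`, and for small `d`) the event is null.
    · refine le_of_eq_of_le ?_ zero_le
      refine measure_eq_zero_iff_ae_notMem.2 (hnorm.mono fun w hw hlt ↦ ?_)
      have h := abs_overlap_le σ w
      rw [hw] at h
      exact absurd (show t < |overlap σ w| from hlt) (by linarith)
  -- The union bound costs a factor `d = exp (log d)`, paid for by `C² / 16 ≥ 1 + 1 / (2ε)`.
  have hbound : (d : ℝ) * A ≤ C * Real.exp (-1 * (d : ℝ) ^ (2 * ε)) := by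
    have hdt : d * t ^ 2 = C ^ 2 * (d : ℝ) ^ (2 * ε) := by
      rw [ht, mul_pow, ← Real.rpow_natCast ((d : ℝ) ^ (ε - 1 / 2)) 2, ← Real.rpow_mul hd0.le]
      have : (d : ℝ) ^ (2 * ε) = d * (d : ℝ) ^ ((ε - 1 / 2) * (2 : ℕ)) := by
        rw [← Real.rpow_one_add' hd0.le (by push_cast; linarith)]
        congr 1
        push_cast
        ring
      rw [this]
      ring
    have hlog := Real.log_le_rpow_div hd0.le (ε := 2 * ε) (by positivity)
    have hdexp : (d : ℝ) = Real.exp (Real.log d) := (Real.exp_log hd0).symm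
    have hpos : 0 < (d : ℝ) ^ (2 * ε) := by positivity
    set D := (d : ℝ) ^ (2 * ε)
    calc (d : ℝ) * A = 2 * (Real.exp (Real.log d) * Real.exp (-(C ^ 2 * D / 16))) := by
          rw [← hdexp, ← hdt]; ring
      _ = 2 * Real.exp (Real.log d - C ^ 2 * D / 16) := by rw [← Real.exp_add]; ring_nf
      _ ≤ C * Real.exp (-1 * D) := by
          have h1 : Real.log d - C ^ 2 * D / 16 ≤ -1 * D := by
            have h2 : C ^ 2 / 16 = (1 + 1 / (2 * ε)) ^ 2 := by rw [hC]; ring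
            have h3 : 1 + 1 / (2 * ε) ≤ C ^ 2 / 16 := by rw [h2]; nlinarith
            have h4 := mul_le_mul_of_nonneg_right h3 hpos.le
            have h5 : D / (2 * ε) = 1 / (2 * ε) * D := by ring
            linarith
          have hC2 : 2 ≤ C := by rw [hC]; linarith
          exact mul_le_mul hC2 (Real.exp_le_exp.2 h1) (Real.exp_pos _).le (by positivity)
  calc μ {w | ∃ k ∈ Finset.Ico 1 d,
          t < |∑ i, w i * w (i + ⟨k % d, Nat.mod_lt _ (by omega)⟩)|}
      ≤ μ (⋃ k ∈ Finset.Ico 1 d,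
          {w | t < |∑ i, w i * w (i + ⟨k % d, Nat.mod_lt _ (by omega)⟩)|}) := by
        refine measure_mono fun w hw ↦ ?_
        obtain ⟨k, hk, h⟩ := hw
        exact Set.mem_biUnion hk h
    _ ≤ ∑ k ∈ Finset.Ico 1 d,
          μ {w | t < |∑ i, w i * w (i + ⟨k % d, Nat.mod_lt _ (by omega)⟩)|} :=
        measure_biUnion_finset_le _ _
    _ ≤ ∑ k ∈ Finset.Ico 1 d, ENNReal.ofReal A := Finset.sum_le_sum hshift
    _ ≤ (d : ENNReal) * ENNReal.ofReal A := by
        rw [Finset.sum_const, nsmul_eq_mul, Nat.card_Ico]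
        gcongr
        omega
    _ = ENNReal.ofReal (d * A) := by
        rw [ENNReal.ofReal_mul hd0.le, ENNReal.ofReal_natCast]
    _ ≤ _ := ENNReal.ofReal_le_ofReal hbound
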